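/- Let β_n ≤ n log n eventually, and consider the random spanning tree WST_n^{β_n} of K_n with i.i.d. Uniform[0,1] labels U_e and tree-weights proportional to exp(−β_n Σ_{e∈T} U_e). Then the expected total length satisfies E[L(WST_n^{β_n})] = O(n log n / (β_n + log n)); in particular, E[L(WST_n^{β_n})] ≤ E[L(MST_n)] + O(n log n / β_n) + O(1/n) whenever β_n ≥ log n. -/

import Mathlib

open MeasureTheory Filter

/-- `T` is a spanning tree of the graph `G`. -/
def IsSpanningTree {V : Type*} [Fintype V] (G : SimpleGraph V) (T : Finset (Sym2 V)) : Prop :=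
  ↑T ⊆ G.edgeSet ∧ (SimpleGraph.fromEdgeSet (↑T : Set (Sym2 V))).IsTree

/-- The total label-length `∑_{e ∈ T} u e` of a tree `T`. -/
noncomputable def treeLen {n : ℕ} (u : Sym2 (Fin n) → ℝ) (T : Finset (Sym2 (Fin n))) : ℝ :=
  ∑ e ∈ T, u e

open Classical in
/-- The quenched expected total length of `WST_n^β` given the labels `u`:
`E[L(WST) | U = u] = (∑_T e^{-β L(T)} L(T)) / (∑_T e^{-β L(T)})`, sums over
spanning trees of `K_n`. -/
noncomputable def quenchedWSTLen (n : ℕ) (β : ℝ) (u : Sym2 (Fin n) → ℝ) : ℝ :=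
  (∑ T ∈ Finset.univ.filter (fun T => IsSpanningTree (⊤ : SimpleGraph (Fin n)) T),
      Real.exp (-β * treeLen u T) * treeLen u T) /
  (∑ T ∈ Finset.univ.filter (fun T => IsSpanningTree (⊤ : SimpleGraph (Fin n)) T),
      Real.exp (-β * treeLen u T))

/-- The law of the i.i.d. Uniform[0,1] edge labels on `K_n`. -/
noncomputable def labelMeasure (n : ℕ) : Measure (Sym2 (Fin n) → ℝ) :=
  Measure.pi fun _ => volume.restrict (Set.Icc (0 : ℝ) 1)

/-- The (annealed) expected total length `E[L(WST_n^β)]`. -/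
noncomputable def EWST (n : ℕ) (β : ℝ) : ℝ :=
  ∫ u, quenchedWSTLen n β u ∂(labelMeasure n)

/-- The total length of the minimum spanning tree for labels `u`. -/
noncomputable def MSTLen (n : ℕ) (u : Sym2 (Fin n) → ℝ) : ℝ :=
  sInf {x | ∃ T, IsSpanningTree (⊤ : SimpleGraph (Fin n)) T ∧ x = treeLen u T}

/-- The expected total length `E[L(MST_n)]`. -/
noncomputable def EMST (n : ℕ) : ℝ := ∫ u, MSTLen n u ∂(labelMeasure n)

/-!
The Gibbs mean of an energy exceeds its minimum by at most `β⁻¹` times the entropy, hence by at most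
`β⁻¹` times the logarithm of the number of states. Since `K_n` has at most `n ^ (2 * n)` spanning
trees, `β * E[L(WST)] ≤ β * E[L(MST)] + 2 * n * log n`. Together with `E[L(WST)] ≤ n` and
`E[L(MST)] ≤ 4` this gives both bounds.

For `E[L(MST)] ≤ 4`, grow a greedy path on about a third of the vertices inside a set of about two
thirds of them. Each step takes the cheapest of about `n / 3` edges not looked at before, so it
costs about `3 / n` on average. The vertices outside the set are then joined to the path, and the
remaining vertices of the set to those outside it, each by the cheapest of about `n / 3` edges.
-/

open scoped ENNReal

section Gibbs

variable {ι : Type*} {s : Finset ι} {f : ι → ℝ}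

/-- The mean energy of the Gibbs measure on `s` with energy `f` at inverse temperature `β`, that is,
of the probability measure on `s` whose weights are proportional to `exp (-β * f i)`. -/
noncomputable def gibbsMean (s : Finset ι) (β : ℝ) (f : ι → ℝ) : ℝ :=
  s.centerMass (fun i => Real.exp (-β * f i)) f

theorem gibbsMean_eq_div (s : Finset ι) (β : ℝ) (f : ι → ℝ) :
    gibbsMean s β f = (∑ i ∈ s, Real.exp (-β * f i) * f i) / ∑ i ∈ s, Real.exp (-β * f i) := by
  simp only [gibbsMean, Finset.centerMass, smul_eq_mul, div_eq_inv_mul]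

theorem gibbsMean_mem_of_convex {K : Set ℝ} (hK : Convex ℝ K) (hs : s.Nonempty) (β : ℝ)
    (hf : ∀ i ∈ s, f i ∈ K) : gibbsMean s β f ∈ K :=
  hK.centerMass_mem (fun _ _ => (Real.exp_pos _).le)
    (Finset.sum_pos (fun _ _ => Real.exp_pos _) hs) hf

theorem exp_neg_mul_sub_le (x K : ℝ) :
    Real.exp (-x) * x - K * Real.exp (-x) ≤ Real.exp (-K) - Real.exp (-x) := by
  have key : Real.exp (-x) * (x - K + 1) ≤ Real.exp (-x) * Real.exp (x - K) := by
    gcongr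
    exact Real.add_one_le_exp _
  rw [← Real.exp_add, show -x + (x - K) = -K by ring] at key
  linarith

theorem sum_exp_neg_mul_le {i : ι} (hi : i ∈ s) (hfi : f i = 0) :
    ∑ j ∈ s, Real.exp (-f j) * f j ≤ Real.log s.card * ∑ j ∈ s, Real.exp (-f j) := by
  have hcard : (0 : ℝ) < s.card := by exact_mod_cast Finset.card_pos.2 ⟨i, hi⟩
  have hone : 1 ≤ ∑ j ∈ s, Real.exp (-f j) := by
    simpa [hfi] using
      Finset.single_le_sum (f := fun j => Real.exp (-f j)) (fun _ _ => (Real.exp_pos _).le) hi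
  have hsum := Finset.sum_le_sum fun j (_ : j ∈ s) => exp_neg_mul_sub_le (f j) (Real.log s.card)
  simp only [Finset.sum_sub_distrib, ← Finset.mul_sum, Finset.sum_const, nsmul_eq_mul,
    Real.exp_neg (Real.log _), Real.exp_log hcard, mul_inv_cancel₀ hcard.ne'] at hsum
  linarith

theorem mul_gibbsMean_le (β : ℝ) {i : ι} (hi : i ∈ s) :
    β * gibbsMean s β f ≤ β * f i + Real.log s.card := by
  have hZ : 0 < ∑ j ∈ s, Real.exp (-β * f j) := Finset.sum_pos (fun _ _ => Real.exp_pos _) ⟨i, hi⟩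
  have hshift (j : ι) : Real.exp (-β * f j) =
      Real.exp (-β * f i) * Real.exp (-(β * (f j - f i))) := by
    rw [← Real.exp_add]
    ring_nf
  have hentropy := mul_le_mul_of_nonneg_left
    (sum_exp_neg_mul_le (f := fun j => β * (f j - f i)) hi (by simp)) (Real.exp_pos (-β * f i)).le
  rw [mul_left_comm, Finset.mul_sum, Finset.mul_sum] at hentropy
  simp only [← mul_assoc, ← hshift] at hentropy
  rw [gibbsMean_eq_div, ← mul_div_assoc, div_le_iff₀ hZ, add_mul, ← sub_le_iff_le_add']
  calc β * ∑ j ∈ s, Real.exp (-β * f j) * f j - β * f i * ∑ j ∈ s, Real.exp (-β * f j)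
      = ∑ j ∈ s, Real.exp (-β * f j) * β * (f j - f i) := by
        simp only [Finset.mul_sum, ← Finset.sum_sub_distrib]
        exact Finset.sum_congr rfl fun j _ => by ring
    _ ≤ Real.log s.card * ∑ j ∈ s, Real.exp (-β * f j) := hentropy

end Gibbs

section SpanningTrees

variable {V : Type*} [Fintype V] {G : SimpleGraph V} {T F : Finset (Sym2 V)}

open Classical in
/-- The edge sets of the spanning trees of `G`. -/
noncomputable def spanningTrees (G : SimpleGraph V) : Finset (Finset (Sym2 V)) :=
  Finset.univ.filter (IsSpanningTree G)

theorem mem_spanningTrees : T ∈ spanningTrees G ↔ IsSpanningTree G T := by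
  simp [spanningTrees]

theorem IsSpanningTree.card_add_one (hT : IsSpanningTree G T) : T.card + 1 = Fintype.card V := by
  classical
  have hedges : (SimpleGraph.fromEdgeSet (T : Set (Sym2 V))).edgeFinset = T := by
    ext e
    simpa using fun he => G.not_isDiag_of_mem_edgeSet (hT.1 he)
  rw [← hT.2.card_edgeFinset, hedges]

theorem exists_isSpanningTree_subset
    (hF : (SimpleGraph.fromEdgeSet (F : Set (Sym2 V))).Connected) :
    ∃ T ⊆ F, IsSpanningTree (⊤ : SimpleGraph V) T := by
  classical
  obtain ⟨H, hHF, hH⟩ := hF.exists_isTree_le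
  have hsub := SimpleGraph.edgeSet_mono hHF
  rw [SimpleGraph.edgeSet_fromEdgeSet] at hsub
  refine ⟨H.edgeFinset, fun e he => ?_, ?_, by simpa using hH⟩
  · exact_mod_cast (hsub (SimpleGraph.mem_edgeFinset.1 he)).1
  · simp

theorem spanningTrees_top_nonempty [Nonempty V] : (spanningTrees (⊤ : SimpleGraph V)).Nonempty := by
  obtain ⟨T, -, hT⟩ := exists_isSpanningTree_subset (V := V) (F := Finset.univ)
    (by simp)
  exact ⟨T, mem_spanningTrees.2 hT⟩

variable (G) in
theorem card_spanningTrees_le :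
    (spanningTrees G).card ≤ (Fintype.card V ^ 2) ^ (Fintype.card V - 1) := by
  classical
  have hsub : spanningTrees G ⊆
      Finset.powersetCard (Fintype.card V - 1) (⊤ : SimpleGraph V).edgeFinset := by
    intro T hT
    rw [mem_spanningTrees] at hT
    refine Finset.mem_powersetCard.2 ⟨fun e he => ?_, by have := hT.card_add_one; omega⟩
    exact SimpleGraph.mem_edgeFinset.2 (SimpleGraph.edgeSet_mono le_top (hT.1 he))
  calc (spanningTrees G).card
      ≤ ((Fintype.card V).choose 2).choose (Fintype.card V - 1) := by
        simpa only [Finset.card_powersetCard, SimpleGraph.card_edgeFinset_top_eq_card_choose_two]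
          using Finset.card_le_card hsub
    _ ≤ ((Fintype.card V).choose 2) ^ (Fintype.card V - 1) := Nat.choose_le_pow _ _
    _ ≤ (Fintype.card V ^ 2) ^ (Fintype.card V - 1) := by
        gcongr
        exact Nat.choose_le_pow _ _

variable (G) in
theorem log_card_spanningTrees_le :
    Real.log (spanningTrees G).card ≤ 2 * (Fintype.card V * Real.log (Fintype.card V)) := by
  rcases (spanningTrees G).eq_empty_or_nonempty with hempty | hne
  · simpa [hempty] using mul_nonneg (Nat.cast_nonneg _) (Real.log_natCast_nonneg _)
  calc Real.log (spanningTrees G).card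
      ≤ Real.log (((Fintype.card V : ℝ) ^ 2) ^ (Fintype.card V - 1)) := by
        have := hne.card_pos
        gcongr
        exact_mod_cast card_spanningTrees_le G
    _ = 2 * (((Fintype.card V - 1 : ℕ) : ℝ) * Real.log (Fintype.card V)) := by
        rw [Real.log_pow, Real.log_pow]
        push_cast
        ring
    _ ≤ 2 * (Fintype.card V * Real.log (Fintype.card V)) := by
        gcongr
        exact Nat.sub_le _ _

end SpanningTrees

section ConnectionCost

variable {V : Type*} {w : Sym2 V → ℝ≥0∞} {A B : Finset V}

/-- The Steiner cost of `A`: the least total weight of a finite set of edges joining any two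
vertices of `A`, possibly through vertices outside `A`. -/
noncomputable def connectionCost (w : Sym2 V → ℝ≥0∞) (A : Finset V) : ℝ≥0∞ :=
  ⨅ (F : Finset (Sym2 V)) (_ : ∀ a ∈ A, ∀ b ∈ A,
    (SimpleGraph.fromEdgeSet (F : Set (Sym2 V))).Reachable a b), ∑ e ∈ F, w e

/-- The cost of joining each vertex of `B` to `A` by its cheapest edge to `A`. -/
noncomputable def attachCost (w : Sym2 V → ℝ≥0∞) (A B : Finset V) : ℝ≥0∞ :=
  ∑ b ∈ B, ⨅ a ∈ A, w s(a, b)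

/-- The total weight of the path which starts at a given vertex and then visits the vertices of a
list in order. -/
noncomputable def pathCost (w : Sym2 V → ℝ≥0∞) : V → List V → ℝ≥0∞
  | _, [] => 0
  | v, x :: l => w s(v, x) + pathCost w x l

theorem connectionCost_le {F : Finset (Sym2 V)} (hF : ∀ a ∈ A, ∀ b ∈ A,
    (SimpleGraph.fromEdgeSet (F : Set (Sym2 V))).Reachable a b) :
    connectionCost w A ≤ ∑ e ∈ F, w e :=
  iInf₂_le F hF

theorem connectionCost_singleton (w : Sym2 V → ℝ≥0∞) (v : V) : connectionCost w {v} = 0 :=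
  le_antisymm (by simpa using connectionCost_le (w := w) (A := {v}) (F := ∅) (by simp)) zero_le

theorem attachCost_anti (w : Sym2 V → ℝ≥0∞) {A A' : Finset V} (h : A ⊆ A') (B : Finset V) :
    attachCost w A' B ≤ attachCost w A B :=
  Finset.sum_le_sum fun _ _ => iInf_le_iInf_of_subset h

theorem reachable_fromEdgeSet_of_mem {E : Set (Sym2 V)} {a b : V} (h : s(a, b) ∈ E) :
    (SimpleGraph.fromEdgeSet E).Reachable a b := by
  rcases eq_or_ne a b with rfl | hab
  · rfl
  · exact SimpleGraph.Adj.reachable ((SimpleGraph.fromEdgeSet_adj E).2 ⟨h, hab⟩)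

variable [DecidableEq V]

theorem connectionCost_insert_le {a b : V} (ha : a ∈ A) :
    connectionCost w (insert b A) ≤ connectionCost w A + w s(a, b) := by
  simp only [connectionCost, ENNReal.iInf_add]
  refine le_iInf₂ fun F hF => (connectionCost_le (F := insert s(a, b) F) ?_).trans ?_
  · have hb (x : V) (hx : x ∈ insert b A) : (SimpleGraph.fromEdgeSet
        ((insert s(a, b) F : Finset (Sym2 V)) : Set (Sym2 V))).Reachable a x := by
      rcases Finset.mem_insert.1 hx with rfl | hxA
      · exact reachable_fromEdgeSet_of_mem (by simp)
      · exact (hF a ha x hxA).mono (SimpleGraph.fromEdgeSet_mono (by simp))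
    exact fun x hx y hy => (hb x hx).symm.trans (hb y hy)
  · by_cases he : s(a, b) ∈ F
    · simp [he]
    · rw [Finset.sum_insert he, add_comm]

theorem connectionCost_union_le (w : Sym2 V → ℝ≥0∞) (A B : Finset V) :
    connectionCost w (A ∪ B) ≤ connectionCost w A + attachCost w A B := by
  induction B using Finset.induction_on with
  | empty => simp [attachCost]
  | insert b B hb ih =>
    have hattach : attachCost w A (insert b B) = attachCost w A B + ⨅ a ∈ A, w s(a, b) := by
      rw [attachCost, Finset.sum_insert hb, add_comm, attachCost]
    rw [Finset.union_insert, hattach, ← add_assoc, ENNReal.add_iInf]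
    refine le_iInf fun a => ?_
    rw [ENNReal.add_iInf]
    exact le_iInf fun ha =>
      (connectionCost_insert_le (Finset.mem_union_left B ha)).trans (add_le_add_left ih _)

theorem connectionCost_path_le (w : Sym2 V → ℝ≥0∞) (v : V) (l : List V) :
    connectionCost w (insert v l.toFinset) ≤ pathCost w v l := by
  induction l generalizing v with
  | nil => simp [connectionCost_singleton]
  | cons x l ih =>
    rw [List.toFinset_cons, pathCost, add_comm, Sym2.eq_swap]
    exact (connectionCost_insert_le (Finset.mem_insert_self x _)).trans (add_le_add_left (ih x) _)

end ConnectionCost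

section DependsOn

variable {δ : Type*} {X : δ → Type*} [∀ i, MeasurableSpace (X i)]
  {μ : ∀ i, Measure (X i)} [∀ i, IsProbabilityMeasure (μ i)] {t : Finset δ}

theorem lmarginal_eq_self_of_dependsOn [DecidableEq δ] {f : (∀ i, X i) → ℝ≥0∞}
    (hf : DependsOn f (↑t)ᶜ) :
    ∫⋯∫⁻_t, f ∂μ = f := by
  funext x
  have hconst (y : ∀ i : t, X i) : f (Function.updateFinset x t y) = f x :=
    hf fun i hi => dif_neg hi
  simp [lmarginal, hconst]

variable [Fintype δ]

theorem lmarginal_eq_lintegral_of_dependsOn [DecidableEq δ] {f : (∀ i, X i) → ℝ≥0∞}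
    (hf : Measurable f) (hft : DependsOn f t) (x : ∀ i, X i) :
    (∫⋯∫⁻_t, f ∂μ) x = ∫⁻ y, f y ∂Measure.pi μ := by
  rw [lintegral_eq_lmarginal_univ x, ← Finset.union_compl t,
    lmarginal_union μ f hf disjoint_compl_right, lmarginal_eq_self_of_dependsOn (t := tᶜ)]
  simpa using hft

/-- Average over the coordinates in `t` first: each `a j` stays put and `g j` becomes its mean. -/
theorem lintegral_iInf_add_le_of_dependsOn {ι : Type*} [Countable ι]
    {a g : ι → (∀ i, X i) → ℝ≥0∞} (ha : ∀ j, Measurable (a j)) (hg : ∀ j, Measurable (g j))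
    (hat : ∀ j, DependsOn (a j) (↑t)ᶜ) (hgt : ∀ j, DependsOn (g j) t)
    {C : ℝ≥0∞} (hC : ∀ j, ∫⁻ x, g j x ∂Measure.pi μ ≤ C) :
    ∫⁻ x, ⨅ j, (a j x + g j x) ∂Measure.pi μ ≤ ∫⁻ x, ⨅ j, a j x ∂Measure.pi μ + C := by
  classical
  have hconst : ∫⁻ x, (⨅ j, a j x) + C ∂Measure.pi μ = ∫⁻ x, ⨅ j, a j x ∂Measure.pi μ + C := by
    simp [lintegral_add_right _ measurable_const]
  rw [← hconst]
  refine lintegral_le_of_lmarginal_le t (by fun_prop) (by fun_prop) fun x => ?_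
  have hbound : DependsOn (fun x => (⨅ j, a j x) + C) (↑t)ᶜ :=
    fun x y hxy => by simp only [hat _ hxy]
  rw [lmarginal_eq_self_of_dependsOn hbound]
  dsimp only
  rw [ENNReal.iInf_add]
  refine le_iInf fun j => ?_
  calc (∫⋯∫⁻_t, fun x => ⨅ j, (a j x + g j x) ∂μ) x
      ≤ (∫⋯∫⁻_t, fun x => a j x + g j x ∂μ) x := lmarginal_mono (fun x => iInf_le _ j) x
    _ = (∫⋯∫⁻_t, a j ∂μ) x + (∫⋯∫⁻_t, g j ∂μ) x :=
        lintegral_add_right _ ((hg j).comp measurable_updateFinset)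
    _ ≤ a j x + C := by
        rw [lmarginal_eq_self_of_dependsOn (hat j),
          lmarginal_eq_lintegral_of_dependsOn (hg j) (hgt j)]
        gcongr
        exact hC j

end DependsOn

section ExpTail

/-- The upper tail of `ν` is at most that of the exponential distribution of rate one. -/
def HasStandardExpTail (ν : Measure ℝ) : Prop :=
  ∀ t > 0, ν (Set.Ici t) ≤ ENNReal.ofReal (Real.exp (-t))

theorem hasStandardExpTail_uniform :
    HasStandardExpTail (volume.restrict (Set.Icc (0 : ℝ) 1)) := by
  intro t _
  calc volume.restrict (Set.Icc (0 : ℝ) 1) (Set.Ici t)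
      ≤ volume (Set.Icc t 1) := by
        rw [Measure.restrict_apply measurableSet_Ici]
        exact measure_mono fun x hx => ⟨hx.1, hx.2.2⟩
    _ = ENNReal.ofReal (1 - t) := Real.volume_Icc
    _ ≤ ENNReal.ofReal (Real.exp (-t)) := ENNReal.ofReal_le_ofReal (Real.one_sub_le_exp_neg t)

variable {ι : Type*} [Fintype ι] {ν : ι → Measure ℝ} [∀ i, IsProbabilityMeasure (ν i)]

theorem pi_forall_mem_le_le (hν : ∀ i, HasStandardExpTail (ν i)) (s : Finset ι) {t : ℝ}
    (ht : 0 < t) :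
    Measure.pi ν {x | ∀ i ∈ s, t ≤ x i} ≤ ENNReal.ofReal (Real.exp (-s.card * t)) := by
  classical
  have hpi : {x : ι → ℝ | ∀ i ∈ s, t ≤ x i} =
      Set.univ.pi fun i => if i ∈ s then Set.Ici t else Set.univ :=
    (Set.univ_pi_ite (s : Set ι) fun _ => Set.Ici t).symm
  calc Measure.pi ν {x | ∀ i ∈ s, t ≤ x i}
      = ∏ i, if i ∈ s then ν i (Set.Ici t) else 1 := by
        rw [hpi, Measure.pi_pi]
        exact Finset.prod_congr rfl fun i _ => by split_ifs <;> simp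
    _ = ∏ i ∈ s, ν i (Set.Ici t) := by rw [Finset.prod_ite_mem, Finset.univ_inter]
    _ ≤ ENNReal.ofReal (Real.exp (-t)) ^ s.card :=
        Finset.prod_le_pow_card _ _ _ fun i _ => hν i t ht
    _ = ENNReal.ofReal (Real.exp (-s.card * t)) := by
        rw [← ENNReal.ofReal_pow (Real.exp_pos _).le, ← Real.exp_nat_mul, mul_neg, neg_mul]

theorem lintegral_biInf_ofReal_le (hν : ∀ i, HasStandardExpTail (ν i)) (s : Finset ι) :
    ∫⁻ x, ⨅ i ∈ s, ENNReal.ofReal (x i) ∂Measure.pi ν ≤ (s.card : ℝ≥0∞)⁻¹ := by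
  rcases s.eq_empty_or_nonempty with rfl | hs
  · simp
  have hcard : (0 : ℝ) < s.card := by exact_mod_cast hs.card_pos
  have hmin (x : ι → ℝ) :
      ⨅ i ∈ s, ENNReal.ofReal (x i) ≤ ENNReal.ofReal (max (s.inf' hs x) 0) := by
    obtain ⟨i, hi, hinf⟩ := Finset.exists_mem_eq_inf' hs x
    rw [hinf, ENNReal.ofReal_max, ENNReal.ofReal_zero, max_eq_left zero_le]
    exact iInf₂_le i hi
  have hmeas : Measurable fun x : ι → ℝ => max (s.inf' hs x) 0 :=
    ((Continuous.finset_inf'_apply hs fun i _ => continuous_apply i).max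
      continuous_const).measurable
  calc ∫⁻ x, ⨅ i ∈ s, ENNReal.ofReal (x i) ∂Measure.pi ν
      ≤ ∫⁻ x, ENNReal.ofReal (max (s.inf' hs x) 0) ∂Measure.pi ν := lintegral_mono hmin
    _ = ∫⁻ t in Set.Ioi 0, Measure.pi ν {x | t ≤ max (s.inf' hs x) 0} :=
        lintegral_eq_lintegral_meas_le _ (.of_forall fun _ => le_max_right _ _) hmeas.aemeasurable
    _ ≤ ∫⁻ t in Set.Ioi 0, ENNReal.ofReal (Real.exp (-s.card * t)) := by
        refine setLIntegral_mono' measurableSet_Ioi fun t (ht : 0 < t) => ?_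
        simpa [le_max_iff, ht.not_ge] using pi_forall_mem_le_le hν s ht
    _ = ENNReal.ofReal (∫ t in Set.Ioi 0, Real.exp (-s.card * t)) :=
        (ofReal_integral_eq_lintegral_ofReal (integrableOn_exp_mul_Ioi (by linarith) 0)
          (.of_forall fun _ => (Real.exp_pos _).le)).symm
    _ = (s.card : ℝ≥0∞)⁻¹ := by
        rw [integral_exp_mul_Ioi (by linarith) 0]
        simp [ENNReal.ofReal_inv_of_pos hcard]

end ExpTail

section GreedyPath

variable {V : Type*} {S T : Finset V} {v : V} {k m : ℕ}

theorem measurable_biInf_ofReal {ι : Type*} (s : Finset ι) :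
    Measurable fun x : ι → ℝ => ⨅ i ∈ s, ENNReal.ofReal (x i) :=
  Measurable.biInf (s : Set ι) s.countable_toSet fun i _ => by fun_prop

/-- The lists of `k` distinct vertices of `S`. -/
def pathsIn (S : Finset V) (k : ℕ) : Set (List V) :=
  {l | l.Nodup ∧ l.length = k ∧ ∀ x ∈ l, x ∈ S}

theorem measurable_pathCost (v : V) (l : List V) :
    Measurable fun u : Sym2 V → ℝ => pathCost (ENNReal.ofReal ∘ u) v l := by
  induction l generalizing v with
  | nil => exact measurable_const
  | cons x l ih => exact Measurable.add (by fun_prop) (ih x)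

theorem dependsOn_pathCost {l : List V} (hv : v ∈ T) (hl : ∀ x ∈ l, x ∈ T) :
    DependsOn (fun u : Sym2 V → ℝ => pathCost (ENNReal.ofReal ∘ u) v l) T.sym2 := by
  induction l generalizing v with
  | nil => exact fun _ _ _ => rfl
  | cons x l ih =>
    rw [List.forall_mem_cons] at hl
    intro u u' h
    simp only [pathCost, Function.comp_apply]
    congr 1
    · rw [h _ (Finset.mk_mem_sym2_iff.2 ⟨hv, hl.1⟩)]
    · exact ih hl.1 hl.2 h

theorem dependsOn_attachCost {A B : Finset V} (hB : Disjoint T B) :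
    DependsOn (fun u : Sym2 V → ℝ => attachCost (ENNReal.ofReal ∘ u) A B) (↑T.sym2)ᶜ := by
  intro u u' h
  refine Finset.sum_congr rfl fun b hb => iInf_congr fun a => iInf_congr fun _ => ?_
  have hab : s(a, b) ∉ T.sym2 := fun hab =>
    Finset.disjoint_right.1 hB hb (Finset.mk_mem_sym2_iff.1 hab).2
  simp only [Function.comp_apply, h _ hab]

theorem attachCost_eq_sum_image [DecidableEq V] (w : Sym2 V → ℝ≥0∞) (A B : Finset V) :
    attachCost w A B = ∑ b ∈ B, ⨅ e ∈ A.image (s(·, b)), w e := by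
  simp only [attachCost, Finset.mem_image, iInf_exists, iInf_and, iInf_comm (ι := Sym2 V),
    iInf_iInf_eq_right]

theorem measurable_attachCost (A B : Finset V) :
    Measurable fun u : Sym2 V → ℝ => attachCost (ENNReal.ofReal ∘ u) A B := by
  classical
  simp only [attachCost_eq_sum_image]
  exact Finset.measurable_sum _ fun b _ => measurable_biInf_ofReal _

theorem iInf_pathsIn_succ_le [DecidableEq V] (w : Sym2 V → ℝ≥0∞) (v : V) (S : Finset V)
    (k : ℕ) :
    ⨅ l : pathsIn S (k + 1), pathCost w v l ≤
      ⨅ x : S, (w s(v, x) + ⨅ l : pathsIn (S.erase x) k, pathCost w x l) := by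
  simp only [ENNReal.add_iInf]
  refine le_iInf fun x => le_iInf fun ⟨l, hnodup, hlength, hmem⟩ =>
    iInf_le_of_le ⟨x :: l, ?_, by simp [hlength], ?_⟩ le_rfl
  · exact List.nodup_cons.2 ⟨fun hx => by simpa using hmem _ hx, hnodup⟩
  · exact List.forall_mem_cons.2 ⟨x.2, fun y hy => Finset.mem_of_mem_erase (hmem y hy)⟩

variable [Fintype V] {ν : Sym2 V → Measure ℝ} [∀ e, IsProbabilityMeasure (ν e)]

theorem lintegral_attachCost_le (hν : ∀ e, HasStandardExpTail (ν e)) (A B : Finset V) :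
    ∫⁻ u, attachCost (ENNReal.ofReal ∘ u) A B ∂Measure.pi ν ≤ B.card * (A.card : ℝ≥0∞)⁻¹ := by
  classical
  simp only [attachCost_eq_sum_image, Function.comp_apply]
  rw [lintegral_finsetSum _ fun b _ => measurable_biInf_ofReal _, ← nsmul_eq_mul]
  refine Finset.sum_le_card_nsmul _ _ _ fun b _ => ?_
  refine (lintegral_biInf_ofReal_le hν _).trans_eq ?_
  rw [Finset.card_image_of_injective _ fun a a' h => Sym2.congr_left.1 h]

theorem lintegral_iInf_ofReal_edge_le (hν : ∀ e, HasStandardExpTail (ν e)) (v : V) (S : Finset V) :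
    ∫⁻ u, ⨅ x : S, ENNReal.ofReal (u s(v, x)) ∂Measure.pi ν ≤ (S.card : ℝ≥0∞)⁻¹ := by
  calc ∫⁻ u, ⨅ x : S, ENNReal.ofReal (u s(v, x)) ∂Measure.pi ν
      = ∫⁻ u, attachCost (ENNReal.ofReal ∘ u) S {v} ∂Measure.pi ν := by
        simp [attachCost, iInf_subtype', Sym2.eq_swap (a := v)]
    _ ≤ (S.card : ℝ≥0∞)⁻¹ := by simpa using lintegral_attachCost_le hν S {v}

/-- Every step of the greedy path can choose among at least `m` edges not looked at before. -/
theorem lintegral_iInf_pathsIn_le (hν : ∀ e, HasStandardExpTail (ν e)) (hv : v ∉ S)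
    (hS : m + k ≤ S.card + 1) :
    ∫⁻ u, ⨅ l : pathsIn S k, pathCost (ENNReal.ofReal ∘ u) v l ∂Measure.pi ν ≤
      k * (m : ℝ≥0∞)⁻¹ := by
  classical
  induction k generalizing v S with
  | zero =>
    refine (lintegral_mono fun u => iInf_le _ ⟨[], by simp [pathsIn]⟩).trans ?_
    simp [pathCost]
  | succ k ih =>
    have hfresh (x : S) : DependsOn (fun u : Sym2 V → ℝ => ENNReal.ofReal (u s(v, x)))
        (↑S.sym2)ᶜ := fun u u' h => by
      dsimp only
      rw [h _ (by simp [hv])]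
    have htail (x : S) : DependsOn (fun u : Sym2 V → ℝ =>
        ⨅ l : pathsIn (S.erase x) k, pathCost (ENNReal.ofReal ∘ u) x l) S.sym2 := fun u u' h =>
      iInf_congr fun l =>
        dependsOn_pathCost x.2 (fun y hy => Finset.mem_of_mem_erase (l.2.2.2 y hy)) h
    calc ∫⁻ u, ⨅ l : pathsIn S (k + 1), pathCost (ENNReal.ofReal ∘ u) v l ∂Measure.pi ν
        ≤ ∫⁻ u, ⨅ x : S, (ENNReal.ofReal (u s(v, x)) +
            ⨅ l : pathsIn (S.erase x) k, pathCost (ENNReal.ofReal ∘ u) x l) ∂Measure.pi ν :=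
          lintegral_mono fun u => iInf_pathsIn_succ_le _ v S k
      _ ≤ ∫⁻ u, ⨅ x : S, ENNReal.ofReal (u s(v, x)) ∂Measure.pi ν + k * (m : ℝ≥0∞)⁻¹ := by
          refine lintegral_iInf_add_le_of_dependsOn (fun x => by fun_prop)
            (fun x => .iInf fun l => measurable_pathCost _ _) hfresh htail fun x => ?_
          exact ih (Finset.notMem_erase _ _) (by rw [Finset.card_erase_of_mem x.2]; omega)
      _ ≤ (m : ℝ≥0∞)⁻¹ + k * (m : ℝ≥0∞)⁻¹ := by
          gcongr
          refine (lintegral_iInf_ofReal_edge_le hν v S).trans ?_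
          gcongr
          omega
      _ = (k + 1 : ℕ) * (m : ℝ≥0∞)⁻¹ := by push_cast; ring

end GreedyPath

section SpanningCost

variable {V : Type*} [Fintype V] {ν : Sym2 V → Measure ℝ} [∀ e, IsProbabilityMeasure (ν e)]

theorem connectionCost_univ_le [DecidableEq V] (w : Sym2 V → ℝ≥0∞) {v : V} {S : Finset V}
    (l : List V) :
    connectionCost w Finset.univ ≤ pathCost w v l +
      attachCost w (insert v l.toFinset) (insert v S)ᶜ + attachCost w (insert v S)ᶜ S := by
  have hcover : insert v l.toFinset ∪ (insert v S)ᶜ ∪ S = Finset.univ := by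
    ext x
    simp only [Finset.mem_union, Finset.mem_insert, Finset.mem_compl, Finset.mem_univ, iff_true]
    tauto
  calc connectionCost w Finset.univ
      ≤ connectionCost w (insert v l.toFinset ∪ (insert v S)ᶜ) +
          attachCost w (insert v l.toFinset ∪ (insert v S)ᶜ) S :=
        hcover ▸ connectionCost_union_le w _ S
    _ ≤ connectionCost w (insert v l.toFinset) + attachCost w (insert v l.toFinset) (insert v S)ᶜ +
          attachCost w (insert v S)ᶜ S :=
        add_le_add (connectionCost_union_le w _ _)
          (attachCost_anti w Finset.subset_union_right S)
    _ ≤ pathCost w v l + attachCost w (insert v l.toFinset) (insert v S)ᶜ +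
          attachCost w (insert v S)ᶜ S := by
        gcongr
        exact connectionCost_path_le w v l

/-- The edges inside `insert v S` carry the path; those leaving it, which are independent of them,
attach the remaining vertices to the path. -/
theorem lintegral_iInf_pathCost_add_attachCost_le [DecidableEq V]
    (hν : ∀ e, HasStandardExpTail (ν e)) {v : V} {S : Finset V} {k : ℕ} (hv : v ∉ S)
    (hS : 2 * k ≤ S.card) :
    ∫⁻ u, ⨅ l : pathsIn S k, (pathCost (ENNReal.ofReal ∘ u) v l +
        attachCost (ENNReal.ofReal ∘ u) (insert v (l : List V).toFinset) (insert v S)ᶜ)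
        ∂Measure.pi ν ≤
      k * ((k + 1 : ℕ) : ℝ≥0∞)⁻¹ + (insert v S)ᶜ.card * ((k + 1 : ℕ) : ℝ≥0∞)⁻¹ := by
  refine (lintegral_iInf_add_le_of_dependsOn (t := (insert v S).sym2ᶜ)
    (fun l => measurable_pathCost _ _) (fun l => measurable_attachCost _ _)
    (fun l => ?_) (fun l => ?_) (fun l => ?_)).trans
    (add_le_add_left (lintegral_iInf_pathsIn_le hν hv (m := k + 1) (by omega)) _)
  · rw [Finset.coe_compl, compl_compl]
    exact dependsOn_pathCost (Finset.mem_insert_self v S)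
      fun x hx => Finset.mem_insert_of_mem (l.2.2.2 x hx)
  · rw [Finset.coe_compl]
    exact dependsOn_attachCost disjoint_compl_right
  · obtain ⟨l, hnodup, hlength, hmem⟩ := l
    have hcard : (insert v l.toFinset).card = k + 1 := by
      rw [Finset.card_insert_of_notMem (by simpa using fun h => hv (hmem v h)),
        List.toFinset_card_of_nodup hnodup, hlength]
    simpa only [hcard] using lintegral_attachCost_le hν (insert v l.toFinset) (insert v S)ᶜ

theorem lintegral_connectionCost_univ_le_add [DecidableEq V]
    (hν : ∀ e, HasStandardExpTail (ν e)) {v : V} {S : Finset V} {k : ℕ} (hv : v ∉ S)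
    (hS : 2 * k ≤ S.card) :
    ∫⁻ u, connectionCost (ENNReal.ofReal ∘ u) Finset.univ ∂Measure.pi ν ≤
      k * ((k + 1 : ℕ) : ℝ≥0∞)⁻¹ + (insert v S)ᶜ.card * ((k + 1 : ℕ) : ℝ≥0∞)⁻¹ +
        S.card * ((insert v S)ᶜ.card : ℝ≥0∞)⁻¹ := by
  calc ∫⁻ u, connectionCost (ENNReal.ofReal ∘ u) Finset.univ ∂Measure.pi ν
      ≤ ∫⁻ u, (⨅ l : pathsIn S k, (pathCost (ENNReal.ofReal ∘ u) v l +
            attachCost (ENNReal.ofReal ∘ u) (insert v (l : List V).toFinset) (insert v S)ᶜ)) +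
          attachCost (ENNReal.ofReal ∘ u) (insert v S)ᶜ S ∂Measure.pi ν := by
        refine lintegral_mono fun u => ?_
        dsimp only
        rw [ENNReal.iInf_add]
        exact le_iInf fun l => connectionCost_univ_le _ _
    _ = ∫⁻ u, ⨅ l : pathsIn S k, (pathCost (ENNReal.ofReal ∘ u) v l +
            attachCost (ENNReal.ofReal ∘ u) (insert v (l : List V).toFinset) (insert v S)ᶜ)
            ∂Measure.pi ν +
          ∫⁻ u, attachCost (ENNReal.ofReal ∘ u) (insert v S)ᶜ S ∂Measure.pi ν :=
        lintegral_add_right _ (measurable_attachCost _ _)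
    _ ≤ k * ((k + 1 : ℕ) : ℝ≥0∞)⁻¹ + (insert v S)ᶜ.card * ((k + 1 : ℕ) : ℝ≥0∞)⁻¹ +
          S.card * ((insert v S)ᶜ.card : ℝ≥0∞)⁻¹ :=
        add_le_add (lintegral_iInf_pathCost_add_attachCost_le hν hv hS)
          (lintegral_attachCost_le hν _ _)

theorem lintegral_connectionCost_univ_le [Nontrivial V] (hν : ∀ e, HasStandardExpTail (ν e)) :
    ∫⁻ u, connectionCost (ENNReal.ofReal ∘ u) Finset.univ ∂Measure.pi ν ≤ 4 := by
  classical
  obtain ⟨k, hk⟩ : ∃ k, k = (Fintype.card V - 2) / 3 := ⟨_, rfl⟩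
  have hV : 2 ≤ Fintype.card V := Fintype.one_lt_card
  obtain ⟨v⟩ : Nonempty V := inferInstance
  obtain ⟨S, hSv, hS⟩ := Finset.exists_subset_card_eq
    (show 2 * k ≤ (Finset.univ.erase v).card by
      rw [Finset.card_erase_of_mem (Finset.mem_univ v), Finset.card_univ]; omega)
  have hv : v ∉ S := fun h => by simpa using hSv h
  have hcompl : (insert v S)ᶜ.card = Fintype.card V - (2 * k + 1) := by
    rw [Finset.card_compl, Finset.card_insert_of_notMem hv, hS]
  calc ∫⁻ u, connectionCost (ENNReal.ofReal ∘ u) Finset.univ ∂Measure.pi ν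
      ≤ k * ((k + 1 : ℕ) : ℝ≥0∞)⁻¹ + (insert v S)ᶜ.card * ((k + 1 : ℕ) : ℝ≥0∞)⁻¹ +
          S.card * ((insert v S)ᶜ.card : ℝ≥0∞)⁻¹ :=
        lintegral_connectionCost_univ_le_add hν hv hS.ge
    _ ≤ k * ((k + 1 : ℕ) : ℝ≥0∞)⁻¹ + (insert v S)ᶜ.card * ((k + 1 : ℕ) : ℝ≥0∞)⁻¹ +
          S.card * ((k + 1 : ℕ) : ℝ≥0∞)⁻¹ := by
        gcongr
        omega
    _ = ((k + (insert v S)ᶜ.card + S.card : ℕ) : ℝ≥0∞) / (k + 1 : ℕ) := by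
        push_cast [div_eq_mul_inv]
        ring
    _ ≤ 4 := by
        refine ENNReal.div_le_of_le_mul ?_
        exact_mod_cast (by omega : k + (insert v S)ᶜ.card + S.card ≤ 4 * (k + 1))

end SpanningCost

section CompleteGraph

variable {n : ℕ}

theorem quenchedWSTLen_eq_gibbsMean (β : ℝ) (u : Sym2 (Fin n) → ℝ) :
    quenchedWSTLen n β u = gibbsMean (spanningTrees ⊤) β (treeLen u) :=
  (gibbsMean_eq_div _ _ _).symm

theorem MSTLen_eq_iInf (u : Sym2 (Fin n) → ℝ) :
    MSTLen n u = ⨅ T : spanningTrees (⊤ : SimpleGraph (Fin n)), treeLen u T := by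
  rw [MSTLen, iInf]
  congr 1
  ext x
  simp [mem_spanningTrees, eq_comm]

theorem MSTLen_le_treeLen (u : Sym2 (Fin n) → ℝ) {T : Finset (Sym2 (Fin n))}
    (hT : IsSpanningTree ⊤ T) : MSTLen n u ≤ treeLen u T :=
  (MSTLen_eq_iInf u).trans_le <|
    ciInf_le (Set.finite_range _).bddBelow (⟨T, mem_spanningTrees.2 hT⟩ : spanningTrees ⊤)

theorem exists_treeLen_eq_MSTLen [NeZero n] (u : Sym2 (Fin n) → ℝ) :
    ∃ T ∈ spanningTrees (⊤ : SimpleGraph (Fin n)), treeLen u T = MSTLen n u := by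
  have := (spanningTrees_top_nonempty (V := Fin n)).to_subtype
  obtain ⟨T, hT⟩ := exists_eq_ciInf_of_finite
    (f := fun T : spanningTrees (⊤ : SimpleGraph (Fin n)) => treeLen u T)
  exact ⟨T, T.2, hT.trans (MSTLen_eq_iInf u).symm⟩

theorem mul_quenchedWSTLen_le [NeZero n] (β : ℝ) (u : Sym2 (Fin n) → ℝ) :
    β * quenchedWSTLen n β u ≤ β * MSTLen n u + 2 * (n * Real.log n) := by
  obtain ⟨T, hT, hlen⟩ := exists_treeLen_eq_MSTLen u
  rw [quenchedWSTLen_eq_gibbsMean, ← hlen]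
  refine (mul_gibbsMean_le β hT).trans ?_
  gcongr
  simpa using log_card_spanningTrees_le (⊤ : SimpleGraph (Fin n))

theorem ofReal_MSTLen_le_connectionCost [NeZero n] {u : Sym2 (Fin n) → ℝ} (hu : ∀ e, 0 ≤ u e) :
    ENNReal.ofReal (MSTLen n u) ≤ connectionCost (ENNReal.ofReal ∘ u) Finset.univ := by
  refine le_iInf₂ fun F hF => ?_
  obtain ⟨T, hTF, hT⟩ := exists_isSpanningTree_subset
    (⟨fun a b => hF a (Finset.mem_univ a) b (Finset.mem_univ b)⟩ :
      (SimpleGraph.fromEdgeSet (F : Set (Sym2 (Fin n)))).Connected)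
  calc ENNReal.ofReal (MSTLen n u)
      ≤ ENNReal.ofReal (treeLen u T) := ENNReal.ofReal_le_ofReal (MSTLen_le_treeLen u hT)
    _ = ∑ e ∈ T, ENNReal.ofReal (u e) := ENNReal.ofReal_sum_of_nonneg fun e _ => hu e
    _ ≤ ∑ e ∈ F, ENNReal.ofReal (u e) := Finset.sum_le_sum_of_subset hTF

theorem treeLen_mem_Icc {u : Sym2 (Fin n) → ℝ} (hu : ∀ e, u e ∈ Set.Icc (0 : ℝ) 1)
    {T : Finset (Sym2 (Fin n))} (hT : T ∈ spanningTrees ⊤) : treeLen u T ∈ Set.Icc (0 : ℝ) n := by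
  have hcard : T.card ≤ n := by
    simpa using (Nat.le_succ _).trans_eq (mem_spanningTrees.1 hT).card_add_one
  refine ⟨Finset.sum_nonneg fun e _ => (hu e).1, ?_⟩
  calc treeLen u T ≤ T.card • (1 : ℝ) := Finset.sum_le_card_nsmul _ _ _ fun e _ => (hu e).2
    _ ≤ n := by simpa using hcard

theorem MSTLen_mem_Icc [NeZero n] {u : Sym2 (Fin n) → ℝ} (hu : ∀ e, u e ∈ Set.Icc (0 : ℝ) 1) :
    MSTLen n u ∈ Set.Icc (0 : ℝ) n := by
  obtain ⟨T, hT, hlen⟩ := exists_treeLen_eq_MSTLen u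
  exact hlen ▸ treeLen_mem_Icc hu hT

theorem quenchedWSTLen_mem_Icc [NeZero n] (β : ℝ) {u : Sym2 (Fin n) → ℝ}
    (hu : ∀ e, u e ∈ Set.Icc (0 : ℝ) 1) : quenchedWSTLen n β u ∈ Set.Icc (0 : ℝ) n :=
  quenchedWSTLen_eq_gibbsMean β u ▸
    gibbsMean_mem_of_convex (convex_Icc 0 (n : ℝ)) spanningTrees_top_nonempty β
      fun _ hT => treeLen_mem_Icc hu hT

theorem measurable_treeLen (T : Finset (Sym2 (Fin n))) :
    Measurable fun u : Sym2 (Fin n) → ℝ => treeLen u T := by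
  unfold treeLen
  fun_prop

theorem measurable_MSTLen : Measurable (MSTLen n) := by
  simp only [funext MSTLen_eq_iInf]
  exact .iInf fun T => measurable_treeLen _

theorem measurable_quenchedWSTLen (β : ℝ) : Measurable (quenchedWSTLen n β) := by
  have := @measurable_treeLen n
  unfold quenchedWSTLen
  fun_prop

instance isProbabilityMeasure_uniform :
    IsProbabilityMeasure (volume.restrict (Set.Icc (0 : ℝ) 1)) := ⟨by simp⟩

instance isProbabilityMeasure_labelMeasure : IsProbabilityMeasure (labelMeasure n) :=
  inferInstanceAs (IsProbabilityMeasure (Measure.pi _))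

theorem ae_forall_mem_Icc : ∀ᵐ u ∂labelMeasure n, ∀ e, u e ∈ Set.Icc (0 : ℝ) 1 :=
  ae_all_iff.2 fun e => (Measure.tendsto_eval_ae_ae (i := e)
    (μ := fun _ : Sym2 (Fin n) => volume.restrict (Set.Icc (0 : ℝ) 1))).eventually
      (ae_restrict_mem measurableSet_Icc)

theorem integrable_MSTLen [NeZero n] : Integrable (MSTLen n) (labelMeasure n) :=
  .of_mem_Icc 0 n measurable_MSTLen.aemeasurable (ae_forall_mem_Icc.mono fun _ => MSTLen_mem_Icc)

theorem integrable_quenchedWSTLen [NeZero n] (β : ℝ) :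
    Integrable (quenchedWSTLen n β) (labelMeasure n) :=
  .of_mem_Icc 0 n (measurable_quenchedWSTLen β).aemeasurable
    (ae_forall_mem_Icc.mono fun _ => quenchedWSTLen_mem_Icc β)

theorem EWST_le_natCast [NeZero n] (β : ℝ) : EWST n β ≤ n := by
  calc EWST n β ≤ ∫ _, (n : ℝ) ∂labelMeasure n :=
        integral_mono_ae (integrable_quenchedWSTLen β) (integrable_const _)
          (ae_forall_mem_Icc.mono fun _ hu => (quenchedWSTLen_mem_Icc β hu).2)
    _ = n := by simp

theorem mul_EWST_le [NeZero n] (β : ℝ) :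
    β * EWST n β ≤ β * EMST n + 2 * (n * Real.log n) := by
  calc β * EWST n β = ∫ u, β * quenchedWSTLen n β u ∂labelMeasure n :=
        (integral_const_mul _ _).symm
    _ ≤ ∫ u, (β * MSTLen n u + 2 * (n * Real.log n)) ∂labelMeasure n :=
        integral_mono ((integrable_quenchedWSTLen β).const_mul β)
          ((integrable_MSTLen.const_mul β).add (integrable_const _)) (mul_quenchedWSTLen_le β)
    _ = β * EMST n + 2 * (n * Real.log n) := by
        rw [integral_add (integrable_MSTLen.const_mul β) (integrable_const _), integral_const_mul]
        simp [EMST]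

theorem EMST_nonneg [NeZero n] : 0 ≤ EMST n :=
  integral_nonneg_of_ae (ae_forall_mem_Icc.mono fun _ hu => (MSTLen_mem_Icc hu).1)

theorem EMST_le_four (hn : 2 ≤ n) : EMST n ≤ 4 := by
  have : NeZero n := ⟨by omega⟩
  have : Nontrivial (Fin n) := Fin.nontrivial_iff_two_le.2 hn
  have hnonneg : 0 ≤ᵐ[labelMeasure n] MSTLen n :=
    ae_forall_mem_Icc.mono fun _ hu => (MSTLen_mem_Icc hu).1
  rw [EMST, integral_eq_lintegral_of_nonneg_ae hnonneg measurable_MSTLen.aestronglyMeasurable]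
  refine ENNReal.toReal_le_of_le_ofReal (by norm_num) ?_
  calc ∫⁻ u, ENNReal.ofReal (MSTLen n u) ∂labelMeasure n
      ≤ ∫⁻ u, connectionCost (ENNReal.ofReal ∘ u) Finset.univ ∂labelMeasure n :=
        lintegral_mono_ae (ae_forall_mem_Icc.mono fun _ hu =>
          ofReal_MSTLen_le_connectionCost fun e => (hu e).1)
    _ ≤ 4 := lintegral_connectionCost_univ_le fun _ => hasStandardExpTail_uniform
    _ = ENNReal.ofReal 4 := by simp

theorem EWST_le_EMST_add [NeZero n] {β : ℝ} (hβ : 0 < β) :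
    EWST n β ≤ EMST n + 2 * (n * Real.log n / β) := by
  rw [← mul_le_mul_iff_right₀ hβ]
  refine (mul_EWST_le β).trans_eq ?_
  field_simp

theorem EWST_le_mul_div (hn : 2 ≤ n) {β : ℝ} (hβ : -Real.log n < β)
    (hβn : β ≤ n * Real.log n) :
    EWST n β ≤ 7 * (n * Real.log n / (β + Real.log n)) := by
  have : NeZero n := ⟨by omega⟩
  have hlog := Real.log_natCast_nonneg n
  rw [← mul_div_assoc, le_div_iff₀ (by linarith)]
  have hmst : β * EMST n ≤ n * Real.log n * 4 := by
    calc β * EMST n ≤ n * Real.log n * EMST n := by gcongr; exact EMST_nonneg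
      _ ≤ n * Real.log n * 4 := by gcongr; exact EMST_le_four hn
  linarith [mul_EWST_le (n := n) β, mul_le_mul_of_nonneg_right (EWST_le_natCast (n := n) β) hlog]

end CompleteGraph

theorem stmt_14_general (β : ℕ → ℝ) :
    ((∀ᶠ n : ℕ in atTop, -Real.log n < β n) → (∀ᶠ n : ℕ in atTop, β n ≤ n * Real.log n) →
      ∃ C > (0 : ℝ), ∀ᶠ n : ℕ in atTop,
        EWST n (β n) ≤ C * ((n : ℝ) * Real.log n / (β n + Real.log n))) ∧
    ((∀ᶠ n : ℕ in atTop, 0 < β n) →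
      ∃ C > (0 : ℝ), ∀ᶠ n : ℕ in atTop,
        EWST n (β n) ≤ EMST n + C * ((n : ℝ) * Real.log n / β n)) := by
  refine ⟨fun hlower hupper => ⟨7, by norm_num, ?_⟩, fun hpos => ⟨2, by norm_num, ?_⟩⟩
  · filter_upwards [hlower, hupper, eventually_ge_atTop 2] with n hl hu hn
    exact EWST_le_mul_div hn hl hu
  · filter_upwards [hpos, eventually_ne_atTop 0] with n hβ hn
    have : NeZero n := ⟨hn⟩
    exact EWST_le_EMST_add hβ

/- **Expected total length of `WST_n^{β_n}` for `β_n = O(n log n)`.**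
If `0 ≤ β n ≤ n log n` eventually, then `E[L(WST_n^{β_n})] = O(n log n/(β_n + log n))`;
in particular, if moreover `β_n ≥ log n` eventually, then
`E[L(WST_n^{β_n})] ≤ E[L(MST_n)] + O(n log n / β_n) + O(1/n)`. -/
theorem stmt_14 (β : ℕ → ℝ) (hβ0 : ∀ n, 0 ≤ β n)
    (hβ : ∀ᶠ n : ℕ in atTop, β n ≤ n * Real.log n) :
    (∃ C > (0 : ℝ), ∀ᶠ n : ℕ in atTop,
        EWST n (β n) ≤ C * ((n : ℝ) * Real.log n / (β n + Real.log n))) ∧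
    ((∀ᶠ n : ℕ in atTop, Real.log n ≤ β n) →
      ∃ C > (0 : ℝ), ∀ᶠ n : ℕ in atTop,
        EWST n (β n) ≤ EMST n + C * ((n : ℝ) * Real.log n / β n) + C * (1 / (n : ℝ))) := by
  have hlog : ∀ᶠ n : ℕ in atTop, 0 < Real.log n :=
    (Real.tendsto_log_atTop.comp tendsto_natCast_atTop_atTop).eventually_gt_atTop 0
  refine ⟨(stmt_14_general β).1 (hlog.mono fun n hn => by linarith [hβ0 n]) hβ, fun hge => ?_⟩
  obtain ⟨C, hC, hbound⟩ := (stmt_14_general β).2 (hlog.mp (hge.mono fun n h h' => h'.trans_le h))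
  exact ⟨C, hC, hbound.mono fun n hn => hn.trans (le_add_of_nonneg_right (by positivity))⟩
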